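/- For 0 < α < 1, the function φ_α(θ) = θ + arg h_α'(e^{iθ}) (where arg is the principal argument and h_α extends analytically across the unit circle minus the point 1) is a continuous, strictly increasing bijection from the interval (0, π] onto the interval ((1−α)π, π]. -/

import Mathlib

/-- The unit disk `{z : ℂ | |z| < 1}`. -/
noncomputable def unitDisk : Set ℂ := Metric.ball 0 1

/-- The extremal convex function of order `α`:
`k_α(z) = ((1-z)^(2α-1) - 1)/(1-2α)` (so that `k_α(0)=0`, `k_α'(0)=1`),
with `k_{1/2}(z) = -log(1-z)` (principal branches). -/
noncomputable def kfun (α : ℝ) (z : ℂ) : ℂ :=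
  if α = 1 / 2 then -Complex.log (1 - z)
  else ((1 - z) ^ ((2 * α - 1 : ℝ) : ℂ) - 1) / ((1 - 2 * α : ℝ) : ℂ)

/-- `h_α(z) = k_α(z)/z` for `z ≠ 0`, `h_α(0) = 1`. -/
noncomputable def hfun (α : ℝ) (z : ℂ) : ℂ :=
  if z = 0 then 1 else kfun α z / z

/-- `f ∈ K(α)`: `f` is analytic on the unit disk, normalized by `f(0)=0`, `f'(0)=1`,
with nonvanishing derivative and `Re(1 + z f''(z)/f'(z)) > α` on the disk. -/
def IsConvexOfOrder (α : ℝ) (f : ℂ → ℂ) : Prop :=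
  DifferentiableOn ℂ f unitDisk ∧ f 0 = 0 ∧ deriv f 0 = 1 ∧
    ∀ z ∈ unitDisk, deriv f z ≠ 0 ∧
      α < (1 + z * deriv (deriv f) z / deriv f z).re

/-- `φ_α(θ) = θ + arg h_α'(e^{iθ})`. -/
noncomputable def phiFun (α : ℝ) (θ : ℝ) : ℝ :=
  θ + (deriv (hfun α) (Complex.exp ((θ : ℂ) * Complex.I))).arg

/-!
Let `μ` be the beta distribution with parameters `2α` and `3 - 2α` and `F z = ∫ dμ(t) / (1 - t z)`.
Then `h_α'(z) = (1 - α) (1 - z) ^ (2α - 2) F z`, so that, up to the choice of the branch,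
`φ_α(θ) = (1 - α) π + α θ + arg F(e^{iθ})` for `0 < θ ≤ π`. The function `F` is continuous on the
closed disk, including the point `1` because `3 - 2α > 1`, and `Re F ≥ 1 / 2` there. As `F 1` and
`F (-1)` are real, the right-hand side is `(1 - α) π` at `θ = 0` and `π` at `θ = π`.

For the monotonicity, the Stein identity of `μ` gives a first order differential equation for `F`,
which on the unit circle reads
`d/dθ (α θ + arg F(e^{iθ})) = 2 Re (1 / ((1 - z) F z)) - 1` with `z = e^{iθ}`.
The right-hand side is positive since `(1 - z) F z`, an average of the numbers
`(1 - z) / (1 - t z)`, lies in the disk `|w - 1| < 1`.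
-/

open Complex MeasureTheory ProbabilityTheory Set

open scoped Topology

theorem re_inv_eq_half_add {u : ℂ} (hu : u ≠ 0) :
    u⁻¹.re = 1 / 2 + (1 - ‖u - 1‖ ^ 2) / (2 * ‖u‖ ^ 2) := by
  have h : ‖u - 1‖ ^ 2 = ‖u‖ ^ 2 - 2 * u.re + 1 := by
    simp only [Complex.sq_norm, normSq_apply, sub_re, one_re, sub_im, one_im]
    ring
  rw [inv_re, ← Complex.sq_norm, h]
  field_simp
  ring

theorem half_lt_re_inv_iff {u : ℂ} (hu : u ≠ 0) : 1 / 2 < u⁻¹.re ↔ ‖u - 1‖ < 1 := by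
  have hpos : 0 < 2 * ‖u‖ ^ 2 := by positivity
  rw [re_inv_eq_half_add hu, lt_add_iff_pos_right, div_pos_iff_of_pos_right hpos, sub_pos,
    sq_lt_one_iff₀ (norm_nonneg _)]

theorem half_le_re_inv_iff {u : ℂ} (hu : u ≠ 0) : 1 / 2 ≤ u⁻¹.re ↔ ‖u - 1‖ ≤ 1 := by
  have hpos : 0 < 2 * ‖u‖ ^ 2 := by positivity
  rw [re_inv_eq_half_add hu, le_add_iff_nonneg_right, le_div_iff₀ hpos, zero_mul, sub_nonneg,
    sq_le_one_iff₀ (norm_nonneg _)]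

theorem half_le_re_inv_one_sub {z : ℂ} (hz : ‖z‖ ≤ 1) (hz1 : z ≠ 1) : 1 / 2 ≤ (1 - z)⁻¹.re :=
  (half_le_re_inv_iff (sub_ne_zero.mpr hz1.symm)).mpr (by simpa using hz)

theorem re_inv_one_sub {z : ℂ} (hz : ‖z‖ = 1) (hz1 : z ≠ 1) : (1 - z)⁻¹.re = 1 / 2 := by
  simp [re_inv_eq_half_add (sub_ne_zero.mpr hz1.symm), hz]

theorem one_sub_exp_mul_I (θ : ℝ) :
    1 - exp (θ * I) = ((2 * Real.sin (θ / 2) : ℝ) : ℂ) * exp (((θ - Real.pi) / 2 : ℝ) * I) := by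
  have hsplit : exp (θ * I) = exp (θ / 2 * I) * exp (θ / 2 * I) := by
    rw [← exp_add]
    ring_nf
  have hrot : exp (((θ - Real.pi) / 2 : ℝ) * I) = -I * exp (θ / 2 * I) := by
    rw [← exp_neg_pi_div_two_mul_I, ← exp_add]
    push_cast
    ring_nf
  have hinv : exp (-(θ / 2) * I) * exp (θ / 2 * I) = 1 := by
    rw [← exp_add]
    simp
  rw [hrot, hsplit, ofReal_mul, ofReal_sin, ofReal_ofNat, ofReal_div, ofReal_ofNat, two_sin]
  linear_combination (I * I) * hinv + (1 - exp (θ / 2 * I) * exp (θ / 2 * I)) * I_mul_I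

theorem sin_half_pos {θ : ℝ} (hθ : θ ∈ Ioo 0 (2 * Real.pi)) : 0 < Real.sin (θ / 2) :=
  Real.sin_pos_of_pos_of_lt_pi (by linarith [hθ.1]) (by linarith [hθ.2])

theorem exp_mul_I_ne_one {θ : ℝ} (hθ : θ ∈ Ioo 0 (2 * Real.pi)) : exp (θ * I) ≠ 1 := by
  have hne : 1 - exp (θ * I) ≠ 0 := by
    rw [one_sub_exp_mul_I]
    have hsin := sin_half_pos hθ
    exact mul_ne_zero (ofReal_ne_zero.mpr (by positivity)) (exp_ne_zero _)
  exact (sub_ne_zero.mp hne).symm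

theorem arg_one_sub_exp_mul_I {θ : ℝ} (hθ : θ ∈ Ioo 0 (2 * Real.pi)) :
    (1 - exp (θ * I)).arg = (θ - Real.pi) / 2 := by
  have hsin := sin_half_pos hθ
  rw [one_sub_exp_mul_I, arg_real_mul _ (by positivity), arg_exp_mul_I, toIocMod_eq_self]
  constructor <;> linarith [hθ.1, hθ.2]

theorem arg_cpow_ofReal_mul {u w : ℂ} (hu : u ≠ 0) (hw : w ≠ 0) {s : ℝ}
    (h : s * u.arg + w.arg ∈ Ioc (-Real.pi) Real.pi) :
    (u ^ (s : ℂ) * w).arg = s * u.arg + w.arg := by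
  have him : (log u * s + log w).im = s * u.arg + w.arg := by
    simp [log_im, mul_comm]
  have hexp : u ^ (s : ℂ) * w = exp (log u * s + log w) := by
    rw [cpow_def_of_ne_zero hu, exp_add, exp_log hw]
  rw [hexp, ← log_im, log_exp, him] <;> rw [him]
  exacts [h.1, h.2]

theorem hasDerivAt_arg_comp_exp_mul_I {f : ℂ → ℂ} {θ : ℝ}
    (hf : DifferentiableAt ℂ f (exp (θ * I))) (hs : f (exp (θ * I)) ∈ slitPlane) :
    HasDerivAt (fun t : ℝ => (f (exp (t * I))).arg)
      (exp (θ * I) * deriv f (exp (θ * I)) / f (exp (θ * I))).re θ := by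
  have hexp : HasDerivAt (fun t : ℝ => exp (t * I)) (exp (θ * I) * I) θ := by
    simpa using ((hasDerivAt_id (θ : ℂ)).mul_const I).cexp.comp_ofReal
  have him := imCLM.hasFDerivAt.comp_hasDerivAt θ ((hf.hasDerivAt.comp θ hexp).clog_real hs)
  refine (him.congr_deriv ?_).congr_of_eventuallyEq (.of_forall fun t => by simp [log_im])
  rw [imCLM_apply, ← mul_I_im, Function.comp_apply]
  ring_nf

/-- The plane cut along `[1, ∞)`, on which the principal powers of `1 - z` are analytic. -/
def cutPlane : Set ℂ := {z | 1 - z ∈ slitPlane}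

theorem isOpen_cutPlane : IsOpen cutPlane :=
  isOpen_slitPlane.preimage (by fun_prop)

theorem starConvex_cutPlane : StarConvex ℝ 0 cutPlane := by
  intro z hz a b ha hb hab
  have h : 1 - (a • 0 + b • z) = a • 1 + b • (1 - z) := by
    linear_combination (norm := module) -hab • (1 : ℂ)
  simpa only [cutPlane, mem_ofPred_eq, h] using starConvex_one_slitPlane hz ha hb hab

theorem zero_mem_cutPlane : 0 ∈ cutPlane := by
  simp [cutPlane]

theorem mem_cutPlane_of_norm_le_one {z : ℂ} (hz : ‖z‖ ≤ 1) (hz1 : z ≠ 1) : z ∈ cutPlane := by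
  have hpos : 0 < (1 - z)⁻¹.re := by linarith [half_le_re_inv_one_sub hz hz1]
  rw [inv_re, div_pos_iff_of_pos_right (normSq_pos.mpr (sub_ne_zero.mpr hz1.symm))] at hpos
  exact Or.inl hpos

theorem one_sub_ne_zero_of_mem_cutPlane {z : ℂ} (hz : z ∈ cutPlane) : 1 - z ≠ 0 :=
  slitPlane_ne_zero hz

theorem one_sub_mul_ne_zero {z : ℂ} (hz : z ∈ cutPlane) {t : ℝ} (ht : t ∈ Icc 0 1) :
    1 - t * z ≠ 0 :=
  one_sub_ne_zero_of_mem_cutPlane (by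
    simpa using starConvex_cutPlane.smul_mem hz ht.1 ht.2)

theorem exists_forall_le_norm_one_sub_mul {z : ℂ} (hz : z ∈ cutPlane) :
    ∃ δ > 0, ∀ w ∈ Metric.ball z δ, ∀ t ∈ Icc (0 : ℝ) 1, δ ≤ ‖1 - t * w‖ := by
  obtain ⟨δ, hδ, hle⟩ := (isCompact_Icc (a := (0 : ℝ)) (b := 1)).exists_forall_le'
    (f := fun t : ℝ => ‖1 - t * z‖) (by fun_prop)
    fun t ht => norm_pos_iff.mpr (one_sub_mul_ne_zero hz ht)
  refine ⟨δ / 2, half_pos hδ, fun w hw t ht => ?_⟩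
  have hdist : ‖t * (w - z)‖ ≤ δ / 2 := by
    rw [norm_mul, norm_real, Real.norm_of_nonneg ht.1, ← dist_eq_norm]
    nlinarith [Metric.mem_ball.mp hw, ht.2, dist_nonneg (x := w) (y := z)]
  have htri : ‖1 - t * z‖ ≤ ‖1 - t * w‖ + ‖t * (w - z)‖ := by
    rw [show 1 - t * z = 1 - t * w + t * (w - z) by ring]
    exact norm_add_le _ _
  linarith [hle t ht]

section Markov

variable {μ : Measure ℝ}

/-- The Markov function `z ↦ ∫ dμ(t) / (1 - t z)` of a measure `μ`, meant for measures carried by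
`[0, 1]`, for which it is analytic on the plane cut along `[1, ∞)`. It is the generating function
of the moments of `μ`. -/
noncomputable def markovFunction (μ : Measure ℝ) (z : ℂ) : ℂ :=
  ∫ t, (1 - t * z)⁻¹ ∂μ

theorem integrable_of_ae_mem_of_continuousOn {E : Type*} [NormedAddCommGroup E]
    [IsFiniteMeasure μ] {K : Set ℝ} (hK : IsCompact K) (hμ : ∀ᵐ t ∂μ, t ∈ K) {f : ℝ → E}
    (hf : ContinuousOn f K) : Integrable f μ := by
  rw [← Measure.restrict_eq_self_of_ae_mem hμ]
  exact hf.integrableOn_compact hK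

theorem continuousOn_inv_one_sub_mul {z : ℂ} (hz : z ∈ cutPlane) :
    ContinuousOn (fun t : ℝ => (1 - t * z)⁻¹) (Icc 0 1) :=
  ContinuousOn.inv₀ (by fun_prop) fun _ => one_sub_mul_ne_zero hz

theorem continuousOn_div_one_sub_mul_sq {z : ℂ} (hz : z ∈ cutPlane) :
    ContinuousOn (fun t : ℝ => t / (1 - t * z) ^ 2) (Icc 0 1) :=
  ContinuousOn.div (by fun_prop) (by fun_prop)
    fun _ ht => pow_ne_zero 2 (one_sub_mul_ne_zero hz ht)

theorem hasDerivAt_markovFunction [IsFiniteMeasure μ] (hμ : ∀ᵐ t ∂μ, t ∈ Icc 0 1) {z : ℂ}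
    (hz : z ∈ cutPlane) :
    HasDerivAt (markovFunction μ) (∫ t : ℝ, t / (1 - t * z) ^ 2 ∂μ) z := by
  obtain ⟨δ, hδ, hle⟩ := exists_forall_le_norm_one_sub_mul hz
  have hint {w : ℂ} (hw : w ∈ cutPlane) := integrable_of_ae_mem_of_continuousOn isCompact_Icc hμ
    (continuousOn_inv_one_sub_mul hw)
  refine (hasDerivAt_integral_of_dominated_loc_of_deriv_le
    (𝕜 := ℂ) (F := fun w (t : ℝ) => (1 - t * w)⁻¹) (F' := fun w t => t / (1 - t * w) ^ 2)
    (bound := fun _ => 1 / δ ^ 2) (Metric.ball_mem_nhds z hδ) ?_ (hint hz) ?_ ?_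
    (integrable_const _) ?_).2
  · filter_upwards [isOpen_cutPlane.mem_nhds hz] with w hw using (hint hw).aestronglyMeasurable
  · exact (integrable_of_ae_mem_of_continuousOn isCompact_Icc hμ
      (continuousOn_div_one_sub_mul_sq hz)).aestronglyMeasurable
  · filter_upwards [hμ] with t ht w hw
    rw [norm_div, norm_pow, norm_real, Real.norm_of_nonneg ht.1]
    gcongr
    · exact ht.2
    · exact hle w hw t ht
  · filter_upwards [hμ] with t ht w hw
    have hne : 1 - t * w ≠ 0 := norm_pos_iff.mp (hδ.trans_le (hle w hw t ht))
    refine ((((hasDerivAt_id w).const_mul (t : ℂ)).const_sub 1).inv hne).congr_deriv ?_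
    simp

theorem markovFunction_ofReal_im (x : ℝ) : (markovFunction μ x).im = 0 := by
  have h : markovFunction μ x = ((∫ t, (1 - t * x)⁻¹ ∂μ : ℝ) : ℂ) := by
    rw [markovFunction, ← integral_complex_ofReal]
    push_cast
    rfl
  rw [h, ofReal_im]

/-- For `0 < t ≤ 1` the kernel `(1 - z) / (1 - t z)` lies in the disk `‖w - 1‖ < 1`, because
`(1 - t z) / (1 - z) = t + (1 - t) / (1 - z)` has real part larger than `1 / 2`. -/
theorem norm_one_sub_mul_inv_one_sub_mul_sub_one_lt {z : ℂ} (hz : ‖z‖ ≤ 1) (hz1 : z ≠ 1) {t : ℝ}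
    (ht : t ∈ Ioc 0 1) : ‖(1 - z) * (1 - t * z)⁻¹ - 1‖ < 1 := by
  have hmem := mem_cutPlane_of_norm_le_one hz hz1
  have h1 := one_sub_ne_zero_of_mem_cutPlane hmem
  have h2 := one_sub_mul_ne_zero hmem (Ioc_subset_Icc_self ht)
  have hsplit : ((1 - z) * (1 - t * z)⁻¹)⁻¹ = t + ((1 - t : ℝ) : ℂ) * (1 - z)⁻¹ := by
    push_cast
    field_simp
    ring
  rw [← half_lt_re_inv_iff (mul_ne_zero h1 (inv_ne_zero h2)), hsplit, add_re, ofReal_re,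
    re_ofReal_mul]
  nlinarith [half_le_re_inv_one_sub hz hz1, ht.1, ht.2]

theorem norm_one_sub_mul_markovFunction_sub_one_lt [IsProbabilityMeasure μ]
    (hμ : ∀ᵐ t ∂μ, t ∈ Ioc 0 1) {z : ℂ} (hz : ‖z‖ ≤ 1) (hz1 : z ≠ 1) :
    ‖(1 - z) * markovFunction μ z - 1‖ < 1 := by
  have hint : Integrable (fun t : ℝ => (1 - z) * (1 - t * z)⁻¹) μ :=
    (integrable_of_ae_mem_of_continuousOn isCompact_Icc
      (hμ.mono fun _ ht => Ioc_subset_Icc_self ht)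
      (continuousOn_inv_one_sub_mul (mem_cutPlane_of_norm_le_one hz hz1))).const_mul _
  have hint' : Integrable (fun t : ℝ => (1 - z) * (1 - t * z)⁻¹ - 1) μ :=
    hint.sub (integrable_const _)
  have heq : (1 - z) * markovFunction μ z - 1 = ∫ t : ℝ, ((1 - z) * (1 - t * z)⁻¹ - 1) ∂μ := by
    simp [integral_sub hint, integral_const_mul, markovFunction]
  obtain ⟨t, ht, hle⟩ := exists_notMem_null_integral_le hint'.norm hμ
  rw [heq]
  calc ‖∫ t : ℝ, ((1 - z) * (1 - t * z)⁻¹ - 1) ∂μ‖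
      ≤ ∫ t : ℝ, ‖(1 - z) * (1 - t * z)⁻¹ - 1‖ ∂μ := norm_integral_le_integral_norm _
    _ ≤ ‖(1 - z) * (1 - t * z)⁻¹ - 1‖ := hle
    _ < 1 := norm_one_sub_mul_inv_one_sub_mul_sub_one_lt hz hz1 (not_not.mp ht)

theorem norm_inv_one_sub_mul_le {z : ℂ} (hz : ‖z‖ ≤ 1) {t : ℝ} (ht : t ∈ Ico 0 1) :
    ‖(1 - t * z)⁻¹‖ ≤ (1 - t)⁻¹ := by
  have hle : 1 - t ≤ ‖1 - t * z‖ := by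
    have htri := norm_sub_norm_le 1 (t * z)
    rw [norm_one, norm_mul, norm_real, Real.norm_of_nonneg ht.1] at htri
    nlinarith [ht.1]
  rw [norm_inv]
  exact inv_anti₀ (sub_pos.mpr ht.2) hle

theorem ofReal_mul_ne_one {z : ℂ} (hz : ‖z‖ ≤ 1) {t : ℝ} (ht : t ∈ Ico 0 1) : t * z ≠ 1 := by
  intro h
  have hnorm := congrArg norm h
  rw [norm_mul, norm_real, Real.norm_of_nonneg ht.1, norm_one] at hnorm
  nlinarith [ht.1, ht.2]

theorem continuousOn_markovFunction (hμ : ∀ᵐ t ∂μ, t ∈ Ico 0 1)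
    (hint : Integrable (fun t => (1 - t)⁻¹) μ) :
    ContinuousOn (markovFunction μ) (Metric.closedBall 0 1) := by
  refine continuousOn_of_dominated (bound := fun t => (1 - t)⁻¹)
    (fun z _ => Measurable.aestronglyMeasurable (by fun_prop)) (fun z hz => ?_) hint ?_
  · filter_upwards [hμ] with t ht using norm_inv_one_sub_mul_le (by simpa using hz) ht
  · filter_upwards [hμ] with t ht
    exact ContinuousOn.inv₀ (by fun_prop) fun z hz =>
      sub_ne_zero.mpr (ofReal_mul_ne_one (by simpa using hz) ht).symm

theorem half_le_re_markovFunction [IsProbabilityMeasure μ] (hμ : ∀ᵐ t ∂μ, t ∈ Ico 0 1)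
    (hint : Integrable (fun t => (1 - t)⁻¹) μ) {z : ℂ} (hz : ‖z‖ ≤ 1) :
    1 / 2 ≤ (markovFunction μ z).re := by
  have hint' : Integrable (fun t : ℝ => (1 - t * z)⁻¹) μ :=
    hint.mono' (Measurable.aestronglyMeasurable (by fun_prop))
      (hμ.mono fun _ ht => norm_inv_one_sub_mul_le hz ht)
  obtain ⟨t, ht, hle⟩ := exists_notMem_null_le_integral hint'.re hμ
  have ht' : t ∈ Ico 0 1 := not_not.mp ht
  have hnorm : ‖t * z‖ ≤ 1 := by
    rw [norm_mul, norm_real, Real.norm_of_nonneg ht'.1]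
    exact mul_le_one₀ ht'.2.le (norm_nonneg z) hz
  calc 1 / 2 ≤ (1 - t * z)⁻¹.re := half_le_re_inv_one_sub hnorm (ofReal_mul_ne_one hz ht')
    _ ≤ ∫ s : ℝ, (1 - s * z)⁻¹.re ∂μ := hle
    _ = (markovFunction μ z).re := integral_re hint'

end Markov

section Beta

variable {a b : ℝ}

theorem measurable_betaPDF (a b : ℝ) : Measurable (betaPDF a b) :=
  (measurable_betaPDFReal a b).ennreal_ofReal

theorem betaMeasure_eq_withDensity_restrict (a b : ℝ) :
    betaMeasure a b = (volume.restrict (Ioo 0 1)).withDensity (betaPDF a b) := by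
  rw [← withDensity_indicator measurableSet_Ioo, betaMeasure]
  refine congrArg _ (indicator_eq_self.mpr fun t ht => ?_).symm
  by_contra h
  exact ht (by rw [betaPDF_eq, if_neg (by exact h), ENNReal.ofReal_zero])

theorem ae_betaMeasure_mem_Ioo (a b : ℝ) : ∀ᵐ t ∂betaMeasure a b, t ∈ Ioo 0 1 := by
  rw [betaMeasure_eq_withDensity_restrict]
  exact (withDensity_absolutelyContinuous _ _).ae_le (ae_restrict_mem measurableSet_Ioo)

theorem toReal_betaPDF (ha : 0 < a) (hb : 0 < b) {t : ℝ} (ht : t ∈ Ioo 0 1) :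
    (betaPDF a b t).toReal = 1 / beta a b * (t ^ (a - 1) * (1 - t) ^ (b - 1)) := by
  rw [betaPDF, ENNReal.toReal_ofReal (betaPDFReal_pos ht.1 ht.2 ha hb).le, betaPDFReal,
    if_pos (by exact ht), mul_assoc]

variable {E : Type*} [NormedAddCommGroup E] [NormedSpace ℝ E]

theorem integral_betaMeasure (ha : 0 < a) (hb : 0 < b) (f : ℝ → E) :
    ∫ t, f t ∂betaMeasure a b =
      (1 / beta a b) • ∫ t in Ioo 0 1, (t ^ (a - 1) * (1 - t) ^ (b - 1)) • f t := by
  rw [betaMeasure_eq_withDensity_restrict, integral_withDensity_eq_integral_toReal_smul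
    (measurable_betaPDF a b) (by simp [betaPDF]), ← integral_smul]
  refine setIntegral_congr_fun measurableSet_Ioo fun t ht => ?_
  simp only [toReal_betaPDF ha hb ht, mul_smul]

theorem integrable_betaMeasure_iff (ha : 0 < a) (hb : 0 < b) {f : ℝ → E} :
    Integrable f (betaMeasure a b) ↔
      IntegrableOn (fun t => (t ^ (a - 1) * (1 - t) ^ (b - 1)) • f t) (Ioo 0 1) := by
  rw [betaMeasure_eq_withDensity_restrict, integrable_withDensity_iff_integrable_smul'
    (measurable_betaPDF a b) (by simp [betaPDF]), IntegrableOn,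
    ← integrable_smul_iff (one_div_pos.mpr (beta_pos ha hb)).ne'
      fun t => (t ^ (a - 1) * (1 - t) ^ (b - 1)) • f t]
  refine integrableOn_congr_fun (fun t ht => ?_) measurableSet_Ioo
  simp only [toReal_betaPDF ha hb ht, mul_smul, Pi.smul_apply]

theorem integrable_inv_one_sub_betaMeasure (ha : 0 < a) (hb : 1 < b) :
    Integrable (fun t => (1 - t)⁻¹) (betaMeasure a b) := by
  have hb' : 0 < b - 1 := sub_pos.mpr hb
  have := isProbabilityMeasureBeta ha hb'
  have hone := (integrable_betaMeasure_iff ha hb').mp (integrable_const (1 : ℝ))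
  refine (integrable_betaMeasure_iff ha (one_pos.trans hb)).mpr
    (hone.congr_fun (fun t ht => ?_) measurableSet_Ioo)
  simp only [smul_eq_mul, mul_one, Real.rpow_sub_one (sub_pos.mpr ht.2).ne' (b - 1)]
  rw [div_eq_mul_inv, mul_assoc]

theorem hasDerivAt_rpow_mul_one_sub_rpow_smul {f : ℝ → E} {f' : E} {t : ℝ} (ht : t ∈ Ioo 0 1)
    (hf : HasDerivAt f f' t) :
    HasDerivAt (fun t => (t ^ a * (1 - t) ^ b) • f t)
      ((t ^ (a - 1) * (1 - t) ^ (b - 1)) • ((a - (a + b) * t) • f t + (t * (1 - t)) • f')) t := by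
  have ht0 := ht.1.ne'
  have ht1 := (sub_pos.mpr ht.2).ne'
  have h1 := (hasDerivAt_id t).rpow_const (p := a) (Or.inl ht0)
  have h2 := ((hasDerivAt_id t).const_sub 1).rpow_const (p := b) (Or.inl ht1)
  refine ((h1.mul h2).smul hf).congr_deriv ?_
  simp only [id_eq, Pi.mul_apply, Real.rpow_sub_one ht0, Real.rpow_sub_one ht1, smul_add, smul_smul]
  rw [add_comm]
  congr 2 <;> field_simp
  ring

/-- The Stein identity of the beta distribution: integrate `d/dt (t ^ a * (1 - t) ^ b * f t)`. -/
theorem integral_betaMeasure_stein [CompleteSpace E] (ha : 0 < a) (hb : 0 < b) {f f' : ℝ → E}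
    (hf : ContinuousOn f (Icc 0 1)) (hf' : ContinuousOn f' (Icc 0 1))
    (hderiv : ∀ t ∈ Ioo 0 1, HasDerivAt f (f' t) t) :
    ∫ t, ((a - (a + b) * t) • f t + (t * (1 - t)) • f' t) ∂betaMeasure a b = 0 := by
  have := isProbabilityMeasureBeta ha hb
  have hint := (integrable_betaMeasure_iff ha hb).mp
    (integrable_of_ae_mem_of_continuousOn (μ := betaMeasure a b) isCompact_Icc
      ((ae_betaMeasure_mem_Ioo a b).mono fun _ ht => Ioo_subset_Icc_self ht)
      (f := fun t => (a - (a + b) * t) • f t + (t * (1 - t)) • f' t) (by fun_prop))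
  have hcont : ContinuousOn (fun t => (t ^ a * (1 - t) ^ b) • f t) (Icc 0 1) := by
    refine ContinuousOn.smul (Continuous.continuousOn ?_) hf
    exact (Real.continuous_rpow_const ha.le).mul
      ((Real.continuous_rpow_const hb.le).comp (by fun_prop))
  have hftc := intervalIntegral.integral_eq_sub_of_hasDerivAt_of_le zero_le_one hcont
    (fun t ht => hasDerivAt_rpow_mul_one_sub_rpow_smul ht (hderiv t ht))
    ((intervalIntegrable_iff_integrableOn_Ioo_of_le zero_le_one).mpr hint)
  rw [intervalIntegral.integral_of_le zero_le_one, integral_Ioc_eq_integral_Ioo] at hftc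
  rw [integral_betaMeasure ha hb, hftc]
  simp [Real.zero_rpow ha.ne', Real.zero_rpow hb.ne']

/-- Euler's integral for the hypergeometric function `₂F₁(1, a; a + b; z)`: the Markov function of
the beta distribution with parameters `a` and `b`. -/
noncomputable def eulerIntegral (a b : ℝ) (z : ℂ) : ℂ :=
  markovFunction (betaMeasure a b) z

theorem hasDerivAt_eulerIntegral (ha : 0 < a) (hb : 0 < b) {z : ℂ} (hz : z ∈ cutPlane) :
    HasDerivAt (eulerIntegral a b) (∫ t : ℝ, t / (1 - t * z) ^ 2 ∂betaMeasure a b) z :=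
  have := isProbabilityMeasureBeta ha hb
  hasDerivAt_markovFunction
    ((ae_betaMeasure_mem_Ioo a b).mono fun _ ht => Ioo_subset_Icc_self ht) hz

theorem hasDerivAt_inv_one_sub_ofReal_mul {z : ℂ} {t : ℝ} (h : 1 - t * z ≠ 0) :
    HasDerivAt (fun t : ℝ => (1 - t * z)⁻¹) (z / (1 - t * z) ^ 2) t := by
  refine ((((hasDerivAt_id (t : ℂ)).mul_const z).const_sub 1).inv h).comp_ofReal.congr_deriv ?_
  simp

/-- Expands `z` times the Stein integrand of `t ↦ (1 - t z)⁻¹` in the kernels of the Markov function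
and of its derivative. -/
theorem mul_stein_inv_one_sub_mul {K : Type*} [Field K] {a b t z : K} (h : 1 - t * z ≠ 0) :
    z * ((a - (a + b) * t) * (1 - t * z)⁻¹ + t * (1 - t) * (z / (1 - t * z) ^ 2)) =
      (a * z - (a + b - 1)) * (1 - t * z)⁻¹ + (a + b - 1) -
        (1 - z) * z * (t / (1 - t * z) ^ 2) := by
  have hq : t * z * (1 - t * z)⁻¹ = (1 - t * z)⁻¹ - 1 := by
    field_simp
    ring
  rw [div_eq_mul_inv, div_eq_mul_inv, ← inv_pow]
  linear_combination (1 - (a + b) - t * z * (1 - t * z)⁻¹) * hq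

theorem one_sub_mul_mul_deriv_eulerIntegral (ha : 0 < a) (hb : 0 < b) {z : ℂ} (hz : z ∈ cutPlane) :
    (1 - z) * (z * deriv (eulerIntegral a b) z) =
      (a + b - 1) - (a + b - 1 - a * z) * eulerIntegral a b z := by
  have := isProbabilityMeasureBeta ha hb
  have hμ := (ae_betaMeasure_mem_Ioo a b).mono fun _ ht => Ioo_subset_Icc_self ht
  have hint {f : ℝ → ℂ} (hf : ContinuousOn f (Icc 0 1)) :=
    integrable_of_ae_mem_of_continuousOn isCompact_Icc hμ hf
  have hq := continuousOn_inv_one_sub_mul hz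
  have hq' := continuousOn_div_one_sub_mul_sq hz
  have hstein := integral_betaMeasure_stein ha hb hq (f' := fun t => z / (1 - t * z) ^ 2)
    (ContinuousOn.div (by fun_prop) (by fun_prop)
      fun t ht => pow_ne_zero 2 (one_sub_mul_ne_zero hz ht))
    fun t ht => hasDerivAt_inv_one_sub_ofReal_mul (one_sub_mul_ne_zero hz (Ioo_subset_Icc_self ht))
  have hpt : ∀ᵐ t : ℝ ∂betaMeasure a b,
      z * ((a - (a + b) * t) • (1 - t * z)⁻¹ + (t * (1 - t)) • (z / (1 - t * z) ^ 2)) =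
        (a * z - (a + b - 1)) * (1 - t * z)⁻¹ + (a + b - 1) -
          (1 - z) * z * (t / (1 - t * z) ^ 2) := by
    filter_upwards [hμ] with t ht
    simpa using mul_stein_inv_one_sub_mul (a := (a : ℂ)) (b := b) (one_sub_mul_ne_zero hz ht)
  have hsum := integral_congr_ae hpt
  rw [integral_const_mul, hstein, mul_zero, integral_sub (hint (by fun_prop)) (hint (by fun_prop)),
    integral_add (hint (by fun_prop)) (integrable_const _), integral_const_mul, integral_const_mul]
    at hsum
  rw [(hasDerivAt_eulerIntegral ha hb hz).deriv, eulerIntegral, markovFunction]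
  simp only [integral_const, probReal_univ, one_smul] at hsum
  linear_combination hsum

/-- On the unit circle `(a + b - 1 - a z) / (1 - z)` has constant real part, so the differential
equation leaves only `1 / ((1 - z) F)`, whose real part exceeds `1 / 2`. -/
theorem neg_half_lt_re_mul_deriv_eulerIntegral_div (ha : 0 < a) (hb : 1 < b) {z : ℂ}
    (hz : ‖z‖ = 1) (hz1 : z ≠ 1) :
    -(a / 2) < (z * deriv (eulerIntegral a b) z / eulerIntegral a b z).re := by
  have := isProbabilityMeasureBeta ha (one_pos.trans hb)
  have hdisk := norm_one_sub_mul_markovFunction_sub_one_lt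
    ((ae_betaMeasure_mem_Ioo a b).mono fun _ ht => Ioo_subset_Ioc_self ht) hz.le hz1
  have hne : (1 - z) * eulerIntegral a b z ≠ 0 := by
    intro h
    rw [← eulerIntegral, h] at hdisk
    norm_num at hdisk
  have hode := one_sub_mul_mul_deriv_eulerIntegral ha (one_pos.trans hb)
    (mem_cutPlane_of_norm_le_one hz.le hz1)
  have hquot : z * deriv (eulerIntegral a b) z / eulerIntegral a b z =
      ((a + b - 1 : ℝ) : ℂ) * ((1 - z) * eulerIntegral a b z)⁻¹ - a -
        ((b - 1 : ℝ) : ℂ) * (1 - z)⁻¹ := by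
    have h1 := left_ne_zero_of_mul hne
    have h2 := right_ne_zero_of_mul hne
    rw [div_eq_iff h2, ← mul_right_inj' h1, hode]
    push_cast
    field_simp
    ring
  have hhalf := (half_lt_re_inv_iff hne).mpr hdisk
  rw [hquot, sub_re, sub_re, re_ofReal_mul, re_ofReal_mul, ofReal_re, re_inv_one_sub hz hz1]
  nlinarith

theorem half_le_re_eulerIntegral (ha : 0 < a) (hb : 1 < b) {z : ℂ} (hz : ‖z‖ ≤ 1) :
    1 / 2 ≤ (eulerIntegral a b z).re :=
  have := isProbabilityMeasureBeta ha (one_pos.trans hb)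
  half_le_re_markovFunction ((ae_betaMeasure_mem_Ioo a b).mono fun _ ht => Ioo_subset_Ico_self ht)
    (integrable_inv_one_sub_betaMeasure ha hb) hz

theorem eulerIntegral_mem_slitPlane (ha : 0 < a) (hb : 1 < b) {z : ℂ} (hz : ‖z‖ ≤ 1) :
    eulerIntegral a b z ∈ slitPlane :=
  Or.inl (half_pos one_pos |>.trans_le (half_le_re_eulerIntegral ha hb hz))

theorem arg_eulerIntegral_ofReal (ha : 0 < a) (hb : 1 < b) {x : ℝ} (hx : |x| ≤ 1) :
    (eulerIntegral a b x).arg = 0 := by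
  have hre := half_le_re_eulerIntegral ha hb (z := x) (by simpa using hx)
  exact arg_eq_zero_iff.mpr ⟨by linarith, markovFunction_ofReal_im x⟩

theorem continuous_arg_eulerIntegral_exp_mul_I (ha : 0 < a) (hb : 1 < b) :
    Continuous fun θ : ℝ => (eulerIntegral a b (exp (θ * I))).arg := by
  have hcont := continuousOn_markovFunction
    ((ae_betaMeasure_mem_Ioo a b).mono fun _ ht => Ioo_subset_Ico_self ht)
    (integrable_inv_one_sub_betaMeasure ha hb)
  have hcomp : Continuous fun θ : ℝ => eulerIntegral a b (exp (θ * I)) :=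
    hcont.comp_continuous (by fun_prop) fun θ => by simp [norm_exp_ofReal_mul_I]
  exact continuous_iff_continuousAt.mpr fun θ =>
    (continuousAt_arg (eulerIntegral_mem_slitPlane ha hb (norm_exp_ofReal_mul_I θ).le)).tendsto.comp
      (hcomp.tendsto θ)

theorem strictMonoOn_arg_eulerIntegral_exp_mul_I (ha : 0 < a) (hb : 1 < b) :
    StrictMonoOn (fun θ : ℝ => a / 2 * θ + (eulerIntegral a b (exp (θ * I))).arg)
      (Icc 0 (2 * Real.pi)) := by
  have hcont := continuous_arg_eulerIntegral_exp_mul_I ha hb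
  refine strictMonoOn_of_deriv_pos (convex_Icc _ _) (by fun_prop) fun θ hθ => ?_
  rw [interior_Icc] at hθ
  have hnorm := norm_exp_ofReal_mul_I θ
  have hne := exp_mul_I_ne_one hθ
  have hdiff := (hasDerivAt_eulerIntegral ha (one_pos.trans hb)
    (mem_cutPlane_of_norm_le_one hnorm.le hne)).differentiableAt
  have harg := hasDerivAt_arg_comp_exp_mul_I hdiff (eulerIntegral_mem_slitPlane ha hb hnorm.le)
  rw [(((hasDerivAt_id' θ).const_mul (a / 2)).fun_add harg).deriv]
  linarith [neg_half_lt_re_mul_deriv_eulerIntegral_div ha hb hnorm hne]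

end Beta

section ConvexExtremal

variable {α : ℝ}

theorem kfun_zero (α : ℝ) : kfun α 0 = 0 := by
  by_cases h : α = 1 / 2 <;> simp [kfun, h]

theorem hasDerivAt_one_sub_cpow (c : ℂ) {z : ℂ} (hz : z ∈ cutPlane) :
    HasDerivAt (fun w => (1 - w) ^ c) (-(c * (1 - z) ^ (c - 1))) z := by
  simpa using ((hasDerivAt_id z).const_sub 1).cpow_const (c := c) hz

theorem hasDerivAt_kfun (α : ℝ) {z : ℂ} (hz : z ∈ cutPlane) :
    HasDerivAt (kfun α) ((1 - z) ^ (2 * α - 2 : ℂ)) z := by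
  by_cases h : α = 1 / 2
  · have hk : kfun α = fun z => -log (1 - z) := by
      funext z
      rw [kfun, if_pos h]
    have hexp : (2 * (α : ℂ) - 2) = -1 := by
      rw [h]
      norm_num
    rw [hk, hexp, cpow_neg_one]
    simpa [neg_div] using (((hasDerivAt_id z).const_sub 1).clog hz).fun_neg
  · have hk : kfun α = fun z : ℂ => ((1 - z) ^ (2 * α - 1 : ℂ) - 1) / (1 - 2 * α) := by
      funext z
      rw [kfun, if_neg h]
      push_cast
      rfl
    have hne : (1 - 2 * α : ℂ) ≠ 0 := by
      norm_cast
      contrapose! h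
      linarith
    rw [hk]
    refine (((hasDerivAt_one_sub_cpow (2 * α - 1) hz).sub_const 1).div_const _).congr_deriv ?_
    rw [div_eq_iff hne]
    ring_nf

/-- Both sides vanish at `0`, and the differential equation of the Euler integral makes their
derivatives equal to `(2 - 2 * α) * z * (1 - z) ^ (2 * α - 3)`. -/
theorem mul_one_sub_cpow_sub_kfun (hα0 : 0 < α) (hα : α < 3 / 2) {z : ℂ} (hz : z ∈ cutPlane) :
    z * (1 - z) ^ (2 * α - 2 : ℂ) - kfun α z =
      (1 - α) * (z ^ 2 * ((1 - z) ^ (2 * α - 2 : ℂ) * eulerIntegral (2 * α) (3 - 2 * α) z)) := by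
  have ha : 0 < 2 * α := by linarith
  have hb : 0 < 3 - 2 * α := by linarith
  have hleft {w : ℂ} (hw : w ∈ cutPlane) :=
    ((hasDerivAt_id' w).fun_mul (hasDerivAt_one_sub_cpow (2 * α - 2) hw)).fun_sub
      (hasDerivAt_kfun α hw)
  have hright {w : ℂ} (hw : w ∈ cutPlane) :=
    (((hasDerivAt_id' w).fun_pow 2).fun_mul ((hasDerivAt_one_sub_cpow (2 * α - 2) hw).fun_mul
      (hasDerivAt_eulerIntegral ha hb hw).differentiableAt.hasDerivAt)).const_mul (1 - α : ℂ)
  refine isOpen_cutPlane.eqOn_of_deriv_eq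
    (starConvex_cutPlane.isPathConnected zero_mem_cutPlane).isConnected.isPreconnected
    (fun w hw => (hleft hw).differentiableAt.differentiableWithinAt)
    (fun w hw => (hright hw).differentiableAt.differentiableWithinAt) (fun w hw => ?_)
    zero_mem_cutPlane (by simp [kfun_zero]) hz
  have hode := one_sub_mul_mul_deriv_eulerIntegral ha hb hw
  have hpow : (1 - w) ^ (2 * α - 2 : ℂ) = (1 - w) ^ (2 * α - 2 - 1 : ℂ) * (1 - w) := by
    have hne := one_sub_ne_zero_of_mem_cutPlane hw
    rw [cpow_sub _ 1 hne, cpow_one, div_mul_cancel₀ _ hne]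
  push_cast at hode
  rw [(hleft hw).deriv, (hright hw).deriv, hpow]
  linear_combination (-(1 - α) * w * (1 - w) ^ (2 * α - 2 - 1 : ℂ)) * hode

theorem deriv_hfun (hα0 : 0 < α) (hα : α < 3 / 2) {z : ℂ} (hz : z ∈ cutPlane) (hz0 : z ≠ 0) :
    deriv (hfun α) z =
      (1 - α) * ((1 - z) ^ (2 * α - 2 : ℂ) * eulerIntegral (2 * α) (3 - 2 * α) z) := by
  have heq : hfun α =ᶠ[𝓝 z] fun w => kfun α w / w := by
    filter_upwards [isOpen_ne.mem_nhds hz0] with w hw using if_neg hw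
  rw [heq.deriv_eq, ((hasDerivAt_kfun α hz).fun_div (hasDerivAt_id' z) hz0).deriv,
    div_eq_iff (pow_ne_zero 2 hz0)]
  linear_combination mul_one_sub_cpow_sub_kfun hα0 hα hz

/-- The continuous branch of the argument of `e^{iθ} h_α'(e^{iθ})`, written so that it also makes
sense at `θ = 0`, where `h_α'` is singular. -/
noncomputable def phiLift (α θ : ℝ) : ℝ :=
  (1 - α) * Real.pi + (α * θ + (eulerIntegral (2 * α) (3 - 2 * α) (exp (θ * I))).arg)

theorem continuous_phiLift (hα0 : 0 < α) (hα1 : α < 1) : Continuous (phiLift α) := by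
  have harg := continuous_arg_eulerIntegral_exp_mul_I (a := 2 * α) (b := 3 - 2 * α)
    (by linarith) (by linarith)
  unfold phiLift
  fun_prop

theorem strictMonoOn_phiLift (hα0 : 0 < α) (hα1 : α < 1) :
    StrictMonoOn (phiLift α) (Icc 0 (2 * Real.pi)) := by
  have hmono := strictMonoOn_arg_eulerIntegral_exp_mul_I (a := 2 * α) (b := 3 - 2 * α)
    (by linarith) (by linarith)
  simp only [mul_div_cancel_left₀ α (two_ne_zero' ℝ)] at hmono
  exact hmono.const_add _

theorem phiLift_zero (hα0 : 0 < α) (hα1 : α < 1) : phiLift α 0 = (1 - α) * Real.pi := by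
  have harg := arg_eulerIntegral_ofReal (a := 2 * α) (b := 3 - 2 * α) (x := 1)
    (by linarith) (by linarith) (by simp)
  simpa [phiLift] using harg

theorem phiLift_pi (hα0 : 0 < α) (hα1 : α < 1) : phiLift α Real.pi = Real.pi := by
  have harg := arg_eulerIntegral_ofReal (a := 2 * α) (b := 3 - 2 * α) (x := -1)
    (by linarith) (by linarith) (by simp)
  rw [ofReal_neg, ofReal_one] at harg
  rw [phiLift, exp_pi_mul_I, harg]
  ring

theorem phiFun_eq_phiLift (hα0 : 0 < α) (hα1 : α < 1) {θ : ℝ} (hθ : θ ∈ Ioc 0 Real.pi) :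
    phiFun α θ = phiLift α θ := by
  have hpi := Real.pi_pos
  have hθ' : θ ∈ Ioo 0 (2 * Real.pi) := ⟨hθ.1, by linarith [hθ.2]⟩
  have hnorm := (norm_exp_ofReal_mul_I θ).le
  have hmem := mem_cutPlane_of_norm_le_one hnorm (exp_mul_I_ne_one hθ')
  have hF := eulerIntegral_mem_slitPlane (a := 2 * α) (b := 3 - 2 * α) (by linarith) (by linarith)
    hnorm
  have hlower : phiLift α 0 < phiLift α θ := strictMonoOn_phiLift hα0 hα1
    ⟨le_rfl, by linarith⟩ (Ioo_subset_Icc_self hθ') hθ.1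
  have hupper : phiLift α θ ≤ phiLift α Real.pi := (strictMonoOn_phiLift hα0 hα1).monotoneOn
    (Ioo_subset_Icc_self hθ') ⟨hpi.le, by linarith⟩ hθ.2
  rw [phiLift_zero hα0 hα1] at hlower
  rw [phiLift_pi hα0 hα1] at hupper
  have hbranch : phiLift α θ - θ = (2 * α - 2) * (1 - exp (θ * I)).arg +
      (eulerIntegral (2 * α) (3 - 2 * α) (exp (θ * I))).arg := by
    rw [phiLift, arg_one_sub_exp_mul_I hθ']
    ring
  have harg := arg_cpow_ofReal_mul (one_sub_ne_zero_of_mem_cutPlane hmem) (slitPlane_ne_zero hF)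
    (s := 2 * α - 2) (by
      rw [← hbranch]
      constructor <;> nlinarith [hθ.1, hθ.2])
  rw [ofReal_sub, ofReal_mul, ofReal_ofNat, ← hbranch] at harg
  rw [phiFun, deriv_hfun hα0 (by linarith) hmem (exp_ne_zero _), ← ofReal_one, ← ofReal_sub,
    arg_real_mul _ (sub_pos.mpr hα1), ofReal_one, harg]
  ring

end ConvexExtremal

/-- for `0 < α < 1`, the function `φ_α(θ) = θ + arg h_α'(e^{iθ})` is a continuous,
strictly increasing bijection from `(0, π]` onto `((1-α)π, π]`. -/
theorem phiFun_bijOn (α : ℝ) (hα0 : 0 < α) (hα1 : α < 1) :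
    ContinuousOn (phiFun α) (Set.Ioc 0 Real.pi) ∧
    StrictMonoOn (phiFun α) (Set.Ioc 0 Real.pi) ∧
    Set.BijOn (phiFun α) (Set.Ioc 0 Real.pi) (Set.Ioc ((1 - α) * Real.pi) Real.pi) := by
  have hpi := Real.pi_pos
  have heq : EqOn (phiLift α) (phiFun α) (Ioc 0 Real.pi) :=
    fun _ hθ => (phiFun_eq_phiLift hα0 hα1 hθ).symm
  have hcont := (continuous_phiLift hα0 hα1).continuousOn (s := Icc 0 Real.pi)
  have hmono : StrictMonoOn (phiLift α) (Icc 0 Real.pi) :=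
    (strictMonoOn_phiLift hα0 hα1).mono (Icc_subset_Icc_right (by linarith))
  have hmono' := hmono.mono Ioc_subset_Icc_self
  have hmaps := hmono.mapsTo_Ioc
  have hsurj := intermediate_value_Ioc hpi.le hcont
  rw [phiLift_zero hα0 hα1, phiLift_pi hα0 hα1] at hmaps hsurj
  exact ⟨(hcont.mono Ioc_subset_Icc_self).congr heq.symm, hmono'.congr heq,
    (BijOn.mk hmaps hmono'.injOn hsurj).congr heq⟩
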